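/- There is a variety in a countable algebraic signature (with countably many operation symbols), defined by a recursive set of equations, which has solvable but not uniformly solvable word problem: for every finite presentation 𝒫 the relation θ_𝒫 is decidable, but there is no single algorithm which, given a finite presentation 𝒫 and terms s,t, decides whether (s,t) ∈ θ_𝒫. -/

import Mathlib

/-!
The variety has constants `d_n` (symbol `2n`) and unary operations `g_m` (symbol `2m+1`). Fix a
primitive recursive `e : ℕ → ℕ` (`enm` below) with values `≥ 2` whose range
is not decidable (it enumerates the halting problem). The laws are consequences of

* `g_m d_n = d_1` if `n = e m`, and `g_m d_n = d_0` otherwise;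
* `g_m (g_k x) = d_0`.

Every term has a normal form `d_n`, `x_i` or `g_m x_i`, coded by a pair of numbers, and the set of
laws is taken to be all pairs of terms with the same normal form; it is decidable because normal
forms are primitive recursive (`nfCode_encode`).

*No uniform algorithm.* In the presentation without generators and with the single relation
`d_n = d_0`, where `n ≥ 3`, the equation `d_0 = d_1` holds iff `n` is in the range of
`e` (`d0_eqv_d1_iff`).

*Each presentation is solvable.* On normal forms, the congruence is the equivalence relation `θ`
generated by the finitely many pairs `(p, q)` coming from the relations and by the pairs
`(g_m p, g_m q)` (`presEqv_iff`). Let `B` bound all numbers occurring in these finitely many `(p, q)`.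
For large `m`, the generating pairs coming from `g_m` involve only `d_0`, `d_1` and the finitely
many `g_m x_i` with `i ≤ B`, and their shape depends on `m` only through which of the finitely many
`n ≤ B` equals `e m`, if any. Accordingly, swapping two large indices of the same kind is a symmetry
of `θ` (`theta_swap`), so a complete invariant of `θ`-classes (`inv`, `theta_iff_ker`) takes its
values from a finite table and is primitive recursive.
-/

open FirstOrder Language

/-- The congruence on the absolutely free algebra (term algebra) `L.Term X` generated by a set
`R` of relations together with all substitution instances of a set `E` of laws (equations between
terms with variables from `ℕ`). -/
inductive PresEqv {L : FirstOrder.Language} {X : Type*}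
    (E : Set (L.Term ℕ × L.Term ℕ)) (R : Set (L.Term X × L.Term X)) :
    L.Term X → L.Term X → Prop
  | rel {s t : L.Term X} : (s, t) ∈ R → PresEqv E R s t
  | law (p : L.Term ℕ × L.Term ℕ) (σ : ℕ → L.Term X) :
      p ∈ E → PresEqv E R (p.1.subst σ) (p.2.subst σ)
  | refl (t : L.Term X) : PresEqv E R t t
  | symm {s t : L.Term X} : PresEqv E R s t → PresEqv E R t s
  | trans {s t u : L.Term X} : PresEqv E R s t → PresEqv E R t u → PresEqv E R s u
  | app {n : ℕ} (f : L.Functions n) (ts us : Fin n → L.Term X) :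
      (∀ i, PresEqv E R (ts i) (us i)) →
      PresEqv E R (Term.func f ts) (Term.func f us)

/-- A binary relation on an encodable type is decidable (relative to the encoding) if some
computable boolean function decides it on codes. -/
def DecidableRelVia {α : Type*} [Encodable α] (r : α → α → Prop) : Prop :=
  ∃ f : ℕ → Bool, Computable f ∧
    ∀ a b : α, r a b ↔ f (Nat.pair (Encodable.encode a) (Encodable.encode b)) = true

/-- A set of an encodable type is decidable (relative to the encoding). -/
def DecidableSetVia {α : Type*} [Encodable α] (s : Set α) : Prop :=
  ∃ f : ℕ → Bool, Computable f ∧ ∀ a : α, a ∈ s ↔ f (Encodable.encode a) = true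

/-- The variety with laws `E` has uniformly solvable word problem: a single algorithm decides,
given a finite presentation (finitely many generators `Fin k` and a finite list `R` of relations)
and a pair of terms, whether the pair lies in the congruence `θ_𝒫`. -/
def UniformWP (L : FirstOrder.Language) [∀ k : ℕ, Encodable (L.Term (Fin k))]
    (E : Set (L.Term ℕ × L.Term ℕ)) : Prop :=
  ∃ f : ℕ → Bool, Computable f ∧
    ∀ (k : ℕ) (R : List (L.Term (Fin k) × L.Term (Fin k))) (s t : L.Term (Fin k)),
      PresEqv E {p | p ∈ R} s t ↔
        f (Encodable.encode
            (⟨k, (R, s, t)⟩ : Σ k : ℕ,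
              List (L.Term (Fin k) × L.Term (Fin k)) × L.Term (Fin k) × L.Term (Fin k))) = true

/-- The variety with laws `E` has solvable word problem: for each finite presentation the
congruence `θ_𝒫` is decidable. -/
def SolvableWP (L : FirstOrder.Language) [∀ k : ℕ, Encodable (L.Term (Fin k))]
    (E : Set (L.Term ℕ × L.Term ℕ)) : Prop :=
  ∀ (k : ℕ) (R : List (L.Term (Fin k) × L.Term (Fin k))),
    DecidableRelVia (PresEqv E {p | p ∈ R})

/-- The finite algebraic signature with `N` operation symbols of arities `ar`. -/
def FinLang (N : ℕ) (ar : Fin N → ℕ) : FirstOrder.Language :=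
  ⟨fun n => {i : Fin N // ar i = n}, fun _ => Empty⟩

instance (N : ℕ) (ar : Fin N → ℕ) (X : Type*) [Encodable X] :
    Encodable ((FinLang N ar).Term X) :=
  inferInstanceAs (Encodable (Language.Term ⟨fun n => {i : Fin N // ar i = n}, fun _ => Empty⟩ X))

/-- The countable algebraic signature with operation symbols indexed by `ℕ` and arity function
`ar`. -/
def CntLang (ar : ℕ → ℕ) : FirstOrder.Language :=
  ⟨fun n => {i : ℕ // ar i = n}, fun _ => Empty⟩

instance (ar : ℕ → ℕ) (X : Type*) [Encodable X] : Encodable ((CntLang ar).Term X) :=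
  inferInstanceAs (Encodable (Language.Term ⟨fun n => {i : ℕ // ar i = n}, fun _ => Empty⟩ X))

namespace SolvNotUnif

open Encodable Relation

/-! ### The enumerating function -/

/-- A primitive recursive function with range `{2} ∪ {c + 3 | the c-th program halts on 0}`: the
argument is read as a pair of a program and a number of steps. -/
def enm (m : ℕ) : ℕ :=
  if (Nat.Partrec.Code.evaln m.unpair.2 (Denumerable.ofNat Nat.Partrec.Code m.unpair.1) 0).isSome
    = true then m.unpair.1 + 3 else 2

lemma enm_primrec : Primrec enm := by
  unfold enm
  refine Primrec.ite ?_ ?_ (Primrec.const 2)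
  · refine Primrec.eq.comp (Primrec.option_isSome.comp ?_) (Primrec.const true)
    exact Nat.Partrec.Code.primrec_evaln.comp (((Primrec.snd.comp Primrec.unpair).pair
      ((Primrec.ofNat _).comp (Primrec.fst.comp Primrec.unpair))).pair (Primrec.const 0))
  · exact Primrec.nat_add.comp (Primrec.fst.comp Primrec.unpair) (Primrec.const 3)

lemma two_le_enm (m : ℕ) : 2 ≤ enm m := by
  unfold enm; split_ifs <;> omega

lemma exists_enm_iff (c : Nat.Partrec.Code) :
    (∃ m, encode c + 3 = enm m) ↔ (Nat.Partrec.Code.eval c 0).Dom := by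
  constructor
  · rintro ⟨m, hm⟩
    unfold enm at hm
    split_ifs at hm with h
    · have hc : c = Denumerable.ofNat Nat.Partrec.Code m.unpair.1 := by
        rw [← show encode c = m.unpair.1 by omega, Denumerable.ofNat_encode]
      rw [← hc] at h
      obtain ⟨x, hx⟩ := Option.isSome_iff_exists.1 h
      exact Part.dom_iff_mem.2 ⟨x, Nat.Partrec.Code.evaln_sound hx⟩
    · omega
  · intro h
    obtain ⟨x, hx⟩ := Part.dom_iff_mem.1 h
    obtain ⟨s, hs⟩ := Nat.Partrec.Code.evaln_complete.1 hx
    refine ⟨Nat.pair (encode c) s, ?_⟩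
    have : (Nat.Partrec.Code.evaln s c 0).isSome = true := Option.isSome_iff_exists.2 ⟨x, hs⟩
    simp [enm, this]

/-! ### Normal forms -/

/-- The arity function: even symbols are constants, odd symbols are unary. -/
def ary (i : ℕ) : ℕ := i % 2

/-- The action of `g_m` on normal forms. A pair `(0, n)` stands for `d_n`, a pair `(1, i)` for the
variable `x_i`, and a pair `(m + 2, i)` for `g_m x_i`. -/
def gam (m : ℕ) (u : ℕ × ℕ) : ℕ × ℕ :=
  if u.1 = 0 then (0, if u.2 = enm m then 1 else 0)
  else if u.1 = 1 then (m + 2, u.2) else (0, 0)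

lemma gam_gam (m k : ℕ) (u : ℕ × ℕ) : gam m (gam k u) = (0, 0) := by
  have := two_le_enm m
  unfold gam
  split_ifs <;> simp_all <;> omega

lemma gam_zero (m : ℕ) : gam m (0, 0) = (0, 0) := by
  have := two_le_enm m
  simp [gam]; omega

/-- The normal form of a term, where `v` gives the normal forms of the variables. -/
def nfv {X : Type*} (v : X → ℕ × ℕ) : (CntLang ary).Term X → ℕ × ℕ
  | .var i => v i
  | @Term.func _ _ n f ts => if h : 0 < n then gam (f.1 / 2) (nfv v (ts ⟨0, h⟩)) else (0, f.1 / 2)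

/-- The normal form of a term over the variables `Fin k`. -/
def nf {k : ℕ} (t : (CntLang ary).Term (Fin k)) : ℕ × ℕ := nfv (fun i => (1, i.1)) t

/-- The normal form of a term over the variables `ℕ`. -/
def nfN (t : (CntLang ary).Term ℕ) : ℕ × ℕ := nfv (fun i => (1, i)) t

/-- The value of a normal form when the variables are given the values `w`. -/
def evalNF (w : ℕ → ℕ × ℕ) (u : ℕ × ℕ) : ℕ × ℕ :=
  if u.1 = 0 then u else if u.1 = 1 then w u.2 else gam (u.1 - 2) (w u.2)

lemma evalNF_gam (w : ℕ → ℕ × ℕ) (m : ℕ) (u : ℕ × ℕ) :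
    evalNF w (gam m u) = gam m (evalNF w u) := by
  by_cases h0 : u.1 = 0
  · simp [evalNF, gam, h0]
  by_cases h1 : u.1 = 1
  · simp [evalNF, gam, h1]
  · have : evalNF w u = gam (u.1 - 2) (w u.2) := by simp [evalNF, h0, h1]
    rw [this, gam_gam]
    simp [evalNF, gam, h0, h1]

lemma nfv_subst {X : Type*} (v : X → ℕ × ℕ) (σ : ℕ → (CntLang ary).Term X)
    (t : (CntLang ary).Term ℕ) :
    nfv v (t.subst σ) = evalNF (fun i => nfv v (σ i)) (nfN t) := by
  induction t with
  | var i => simp [nfN, nfv, evalNF, Term.subst]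
  | @func n f ts ih =>
    by_cases h : 0 < n
    · have := ih ⟨0, h⟩
      simp only [nfN, Term.subst, nfv, h, dif_pos] at this ⊢
      rw [this, evalNF_gam]
    · simp [nfN, Term.subst, nfv, h, evalNF]

/-- The laws: all pairs of terms with the same normal form. -/
def laws : Set ((CntLang ary).Term ℕ × (CntLang ary).Term ℕ) := {p | nfN p.1 = nfN p.2}

/-- The constant `d_n` as a term. -/
def dTerm {X : Type*} (n : ℕ) : (CntLang ary).Term X :=
  @Term.func (CntLang ary) X 0 ⟨2 * n, by simp [ary]⟩ Fin.elim0

/-- The term `g_m t`. -/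
def gTerm {X : Type*} (m : ℕ) (t : (CntLang ary).Term X) : (CntLang ary).Term X :=
  @Term.func (CntLang ary) X 1 ⟨2 * m + 1, by simp [ary, Nat.add_mod]⟩ (fun _ => t)

lemma nfv_dTerm {X : Type*} (v : X → ℕ × ℕ) (n : ℕ) : nfv v (dTerm n) = (0, n) := by
  simp [dTerm, nfv]

lemma nfv_gTerm {X : Type*} (v : X → ℕ × ℕ) (m : ℕ) (t : (CntLang ary).Term X) :
    nfv v (gTerm m t) = gam m (nfv v t) := by
  simp only [gTerm, nfv, zero_lt_one, dif_pos]
  congr 1; omega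

lemma nfN_relabel {k : ℕ} (t : (CntLang ary).Term (Fin k)) : nfN (t.relabel Fin.val) = nf t := by
  induction t with
  | var i => rfl
  | @func n f ts ih =>
    by_cases h : 0 < n
    · have := ih ⟨0, h⟩
      simp only [nf, nfN, Term.relabel, nfv, h, dif_pos] at this ⊢
      rw [this]
    · simp [nf, nfN, Term.relabel, nfv, h]

lemma subst_relabel {k : ℕ} (σ : ℕ → (CntLang ary).Term (Fin k)) (hσ : ∀ i : Fin k, σ i = .var i)
    (t : (CntLang ary).Term (Fin k)) : (t.relabel Fin.val).subst σ = t := by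
  induction t with
  | var i => exact hσ i
  | @func n f ts ih =>
    simp only [Term.relabel, Term.subst]
    congr 1
    funext i
    exact ih i

lemma presEqv_of_nf_eq {k : ℕ} (R : Set ((CntLang ary).Term (Fin k) × (CntLang ary).Term (Fin k)))
    {s t : (CntLang ary).Term (Fin k)} (h : nf s = nf t) : PresEqv laws R s t := by
  let σ : ℕ → (CntLang ary).Term (Fin k) := fun i => if h : i < k then .var ⟨i, h⟩ else dTerm 0
  have hσ : ∀ i : Fin k, σ i = .var i := fun i => by simp [σ]
  have := PresEqv.law (R := R) (E := laws) (s.relabel Fin.val, t.relabel Fin.val) σ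
    (by simpa [laws, nfN_relabel] using h)
  simpa only [subst_relabel σ hσ] using this

/-! ### The congruence on normal forms -/

/-- The generating pairs of the congruence on normal forms: the pairs in `L` and their images under
each `g_m`. Iterated images are not needed since `g_m g_k` is constant. -/
def Gen (L : List ((ℕ × ℕ) × (ℕ × ℕ))) (u v : ℕ × ℕ) : Prop :=
  (u, v) ∈ L ∨ ∃ m p q, (p, q) ∈ L ∧ u = gam m p ∧ v = gam m q

/-- The congruence on normal forms generated by `L`. -/
def theta (L : List ((ℕ × ℕ) × (ℕ × ℕ))) : ℕ × ℕ → ℕ × ℕ → Prop := EqvGen (Gen L)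

lemma theta_gam {L : List ((ℕ × ℕ) × (ℕ × ℕ))} {u v : ℕ × ℕ} (m : ℕ) (h : theta L u v) :
    theta L (gam m u) (gam m v) := by
  induction h with
  | rel u v h =>
    rcases h with h | ⟨k, p, q, -, rfl, rfl⟩
    · exact .rel _ _ (.inr ⟨m, u, v, h, rfl, rfl⟩)
    · rw [gam_gam, gam_gam]; exact .refl _
  | refl => exact .refl _
  | symm _ _ _ ih => exact .symm _ _ ih
  | trans _ _ _ _ _ ih1 ih2 => exact .trans _ _ _ ih1 ih2

/-- The pairs of normal forms of a list of relations. -/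
def nfRel {k : ℕ} (R : List ((CntLang ary).Term (Fin k) × (CntLang ary).Term (Fin k))) :
    List ((ℕ × ℕ) × (ℕ × ℕ)) := R.map fun p => (nf p.1, nf p.2)

lemma theta_of_presEqv {k : ℕ} {R : List ((CntLang ary).Term (Fin k) × (CntLang ary).Term (Fin k))}
    {s t : (CntLang ary).Term (Fin k)} (h : PresEqv laws {p | p ∈ R} s t) :
    theta (nfRel R) (nf s) (nf t) := by
  induction h with
  | @rel s t h => exact .rel _ _ (.inl (List.mem_map.2 ⟨(s, t), h, rfl⟩))
  | law p σ hp =>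
    have hp' : nfN p.1 = nfN p.2 := hp
    rw [nf, nf, nfv_subst, nfv_subst, hp']
    exact .refl _
  | refl => exact .refl _
  | symm _ ih => exact .symm _ _ ih
  | trans _ _ ih1 ih2 => exact .trans _ _ _ ih1 ih2
  | @app n f ts us _ ih =>
    by_cases h : 0 < n
    · simp only [nf, nfv, h, dif_pos]
      exact theta_gam _ (ih ⟨0, h⟩)
    · simp only [nf, nfv, h, dif_neg, not_false_eq_true]
      exact .refl _

lemma exists_of_theta {k : ℕ} {R : List ((CntLang ary).Term (Fin k) × (CntLang ary).Term (Fin k))}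
    {u v : ℕ × ℕ} (h : theta (nfRel R) u v) :
    u = v ∨ ∃ s t, nf s = u ∧ nf t = v ∧ PresEqv laws {p | p ∈ R} s t := by
  induction h with
  | rel u v h =>
    right
    rcases h with h | ⟨m, p, q, h, rfl, rfl⟩
    · obtain ⟨⟨s, t⟩, hst, he⟩ := List.mem_map.1 h
      obtain ⟨rfl, rfl⟩ := Prod.mk.inj he
      exact ⟨s, t, rfl, rfl, .rel hst⟩
    · obtain ⟨⟨s, t⟩, hst, he⟩ := List.mem_map.1 h
      obtain ⟨rfl, rfl⟩ := Prod.mk.inj he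
      exact ⟨gTerm m s, gTerm m t, nfv_gTerm _ _ _, nfv_gTerm _ _ _, .app _ _ _ fun _ => .rel hst⟩
  | refl => exact .inl rfl
  | symm _ _ _ ih =>
    rcases ih with rfl | ⟨s, t, hs, ht, h⟩
    · exact .inl rfl
    · exact .inr ⟨t, s, ht, hs, h.symm⟩
  | trans _ _ _ _ _ ih1 ih2 =>
    rcases ih1 with rfl | ⟨s, t, hs, ht, h⟩
    · exact ih2
    rcases ih2 with rfl | ⟨s', t', hs', ht', h'⟩
    · exact .inr ⟨s, t, hs, ht, h⟩
    · exact .inr ⟨s, t', hs, ht', h.trans ((presEqv_of_nf_eq _ (ht.trans hs'.symm)).trans h')⟩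

lemma presEqv_iff {k : ℕ} (R : List ((CntLang ary).Term (Fin k) × (CntLang ary).Term (Fin k)))
    (s t : (CntLang ary).Term (Fin k)) :
    PresEqv laws {p | p ∈ R} s t ↔ theta (nfRel R) (nf s) (nf t) := by
  refine ⟨theta_of_presEqv, fun h => ?_⟩
  rcases exists_of_theta h with h | ⟨s', t', hs, ht, h⟩
  · exact presEqv_of_nf_eq _ h
  · exact (presEqv_of_nf_eq _ hs.symm).trans (h.trans (presEqv_of_nf_eq _ ht))

lemma d0_eqv_d1_iff (n : ℕ) :
    PresEqv laws {p | p ∈ [((dTerm (n + 3) : (CntLang ary).Term (Fin 0)), dTerm 0)]}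
      (dTerm 0) (dTerm 1) ↔ ∃ m, n + 3 = enm m := by
  rw [presEqv_iff]
  simp only [nfRel, nf, List.map_cons, List.map_nil, nfv_dTerm]
  constructor
  · intro h
    by_contra hne
    push Not at hne
    -- The map identifying `d_{n+3}` with `d_0` and nothing else is constant on classes.
    have key : ∀ u v, theta [((0, n + 3), (0, 0))] u v →
        (if u = (0, n + 3) then (0, 0) else u) = (if v = (0, n + 3) then ((0 : ℕ), (0 : ℕ)) else v) := by
      intro u v h
      induction h with
      | rel u v h =>
        rcases h with h | ⟨m, p, q, h, rfl, rfl⟩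
        · simp only [List.mem_singleton, Prod.mk.injEq] at h
          simp [h.1, h.2]
        · simp only [List.mem_singleton, Prod.mk.injEq] at h
          rw [h.1, h.2, gam_zero]
          simp [gam, hne m]
      | refl => rfl
      | symm _ _ _ ih => exact ih.symm
      | trans _ _ _ _ _ ih1 ih2 => exact ih1.trans ih2
    simpa using key _ _ h
  · rintro ⟨m, hm⟩
    refine .symm _ _ (.rel _ _ (.inr ⟨m, (0, n + 3), (0, 0), by simp, ?_, (gam_zero m).symm⟩))
    simp [gam, hm]

/-! ### Symmetry and the invariant of classes -/

/-- A bound on all numbers occurring in `L`; at least `2`, so that `d_0`, `d_1` are below it. -/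
def Bounds (B : ℕ) (L : List ((ℕ × ℕ) × (ℕ × ℕ))) : Prop :=
  2 ≤ B ∧ ∀ p q, (p, q) ∈ L → (p.1 ≤ B ∧ p.2 ≤ B) ∧ (q.1 ≤ B ∧ q.2 ≤ B)

lemma exists_bounds (L : List ((ℕ × ℕ) × (ℕ × ℕ))) : ∃ B, Bounds B L := by
  induction L with
  | nil => exact ⟨2, le_rfl, by simp⟩
  | cons a L ih =>
    obtain ⟨B, h2, hB⟩ := ih
    refine ⟨B + a.1.1 + a.1.2 + a.2.1 + a.2.2, by omega, fun p q h => ?_⟩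
    rcases List.mem_cons.1 h with rfl | h
    · dsimp only; omega
    · have := hB p q h
      omega

/-- The kind of a first coordinate `a`: small ones are their own kind, and `a = m + 2 > B` is
classified by which `n ≤ B` equals `e m`, if any. -/
def kind (B a : ℕ) : ℕ := if a ≤ B then a else B + 1 + min (enm (a - 2)) (B + 1)

lemma kind_le (B a : ℕ) : kind B a ≤ 2 * B + 2 := by
  unfold kind; split_ifs <;> omega

lemma kind_primrec (B : ℕ) : Primrec (kind B) := by
  unfold kind
  refine Primrec.ite (Primrec.nat_le.comp Primrec.id (Primrec.const B)) Primrec.id ?_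
  exact Primrec.nat_add.comp (Primrec.const _) (Primrec.nat_min.comp
    (enm_primrec.comp (Primrec.nat_sub.comp Primrec.id (Primrec.const 2))) (Primrec.const _))

/-- Swapping the first coordinates `a` and `b`. -/
def sw (a b : ℕ) (u : ℕ × ℕ) : ℕ × ℕ := (Equiv.swap a b u.1, u.2)

lemma sw_of_le {B a b : ℕ} (ha : B < a) (hb : B < b) {u : ℕ × ℕ} (hu : u.1 ≤ B) :
    sw a b u = u := by
  unfold sw
  rw [Equiv.swap_apply_of_ne_of_ne (by omega) (by omega)]

lemma sw_gam {B a b : ℕ} (h2 : 2 ≤ B) (ha : B < a) (hb : B < b) (hk : kind B a = kind B b) (m : ℕ) :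
    ∃ m', ∀ p : ℕ × ℕ, p.2 ≤ B → sw a b (gam m p) = gam m' p := by
  have hk' : min (enm (a - 2)) (B + 1) = min (enm (b - 2)) (B + 1) := by
    simpa [kind, not_le.2 ha, not_le.2 hb] using hk
  -- It suffices that `m'` is the index with `m' + 2 = swap a b (m + 2)`.
  have aux : ∀ m', Equiv.swap a b (m + 2) = m' + 2 →
      (∀ n ≤ B, n = enm m ↔ n = enm m') →
      ∃ m', ∀ p : ℕ × ℕ, p.2 ≤ B → sw a b (gam m p) = gam m' p := by
    intro m' h1 h3
    refine ⟨m', fun p hp => ?_⟩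
    have h0 : Equiv.swap a b 0 = 0 := Equiv.swap_apply_of_ne_of_ne (by omega) (by omega)
    have h4 := h3 _ hp
    by_cases hp0 : p.1 = 0
    · simp [gam, sw, hp0, h0, h4]
    by_cases hp1 : p.1 = 1
    · simp [gam, sw, hp1, h1]
    · simp [gam, sw, hp0, hp1, h0]
  by_cases hma : m + 2 = a
  · have hm : a - 2 = m := by omega
    rw [hm] at hk'
    refine aux (b - 2) (by rw [hma, Equiv.swap_apply_left]; omega) fun n hn => by omega
  by_cases hmb : m + 2 = b
  · have hm : b - 2 = m := by omega
    rw [hm] at hk'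
    refine aux (a - 2) (by rw [hmb, Equiv.swap_apply_right]; omega) fun n hn => by omega
  · exact aux m (Equiv.swap_apply_of_ne_of_ne hma hmb) fun n hn => Iff.rfl

/-- Swapping two large indices of the same kind is an automorphism of `theta`. -/
lemma theta_swap {L : List ((ℕ × ℕ) × (ℕ × ℕ))} {B a b : ℕ} (hB : Bounds B L) (ha : B < a)
    (hb : B < b) (hk : kind B a = kind B b) {u v : ℕ × ℕ} (h : theta L u v) :
    theta L (sw a b u) (sw a b v) := by
  induction h with
  | rel u v h =>
    refine .rel _ _ ?_
    rcases h with h | ⟨m, p, q, h, rfl, rfl⟩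
    · have := hB.2 _ _ h
      rw [sw_of_le ha hb this.1.1, sw_of_le ha hb this.2.1]
      exact .inl h
    · have := hB.2 _ _ h
      obtain ⟨m', hm'⟩ := sw_gam hB.1 ha hb hk m
      exact .inr ⟨m', p, q, h, hm' p this.1.2, hm' q this.2.2⟩
  | refl => exact .refl _
  | symm _ _ _ ih => exact .symm _ _ ih
  | trans _ _ _ _ _ ih1 ih2 => exact .trans _ _ _ ih1 ih2

/-- Codes of the small elements equivalent to `u`. -/
def smallSet (L : List ((ℕ × ℕ) × (ℕ × ℕ))) (B : ℕ) (u : ℕ × ℕ) : Set ℕ :=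
  {c | c.unpair.1 ≤ B ∧ c.unpair.2 ≤ B ∧ theta L u c.unpair}

/-- Second coordinates of the elements equivalent to `u` in the same block, i.e. with the same
first coordinate. -/
def blockSet (L : List ((ℕ × ℕ) × (ℕ × ℕ))) (u : ℕ × ℕ) : Set ℕ := {j | theta L u (u.1, j)}

open Classical in
/-- An invariant of the class of an element `u` with `u.2 ≤ B`: an even number naming the least
small element of the class, if there is one; an odd number naming the least element of the class in
the block of `u` otherwise. -/
noncomputable def inv (L : List ((ℕ × ℕ) × (ℕ × ℕ))) (B : ℕ) (u : ℕ × ℕ) : ℕ :=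
  if (smallSet L B u).Nonempty then 2 * sInf (smallSet L B u) else 2 * sInf (blockSet L u) + 1

/-- Two elements with equal invariants, in the same block if the invariant is only meaningful
inside blocks. Elements `u` with `u.2 > B` are equivalent to themselves only. -/
def ker (L : List ((ℕ × ℕ) × (ℕ × ℕ))) (B : ℕ) (u v : ℕ × ℕ) : Prop :=
  u = v ∨ (u.2 ≤ B ∧ v.2 ≤ B ∧ inv L B u = inv L B v ∧ (inv L B u % 2 = 0 ∨ u.1 = v.1))

lemma theta_of_ker {L : List ((ℕ × ℕ) × (ℕ × ℕ))} {B : ℕ} {u v : ℕ × ℕ} (h : ker L B u v) :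
    theta L u v := by
  rcases h with rfl | ⟨-, -, h, h'⟩
  · exact .refl _
  unfold inv at h h'
  by_cases hu : (smallSet L B u).Nonempty <;> by_cases hv : (smallSet L B v).Nonempty
  · simp only [hu, hv, if_true] at h
    have h1 := (Nat.sInf_mem hu).2.2
    have h2 := (Nat.sInf_mem hv).2.2
    rw [← show sInf (smallSet L B u) = sInf (smallSet L B v) by omega] at h2
    exact .trans _ _ _ h1 (.symm _ _ h2)
  · simp only [hu, hv, if_true, if_false] at h; omega
  · simp only [hu, hv, if_true, if_false] at h; omega
  · simp only [hu, hv, if_false] at h h'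
    have h3 : u.1 = v.1 := by omega
    have h1 : theta L u (u.1, _) := Nat.sInf_mem (s := blockSet L u) ⟨u.2, .refl _⟩
    have h2 : theta L v (v.1, _) := Nat.sInf_mem (s := blockSet L v) ⟨v.2, .refl _⟩
    rw [← show sInf (blockSet L u) = sInf (blockSet L v) by omega, ← h3] at h2
    exact .trans _ _ _ h1 (.symm _ _ h2)

/-- Equivalent elements are in `ker` provided that they lie in the same block or one is small. -/
lemma ker_of_theta_aux {L : List ((ℕ × ℕ) × (ℕ × ℕ))} {B : ℕ} {u v : ℕ × ℕ} (h : theta L u v)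
    (hu : u.2 ≤ B) (hv : v.2 ≤ B) (hc : u.1 ≤ B ∨ v.1 ≤ B ∨ u.1 = v.1) : ker L B u v := by
  have hs : smallSet L B u = smallSet L B v := by
    ext c
    simp only [smallSet, Set.mem_ofPred_eq]
    have : theta L u c.unpair ↔ theta L v c.unpair :=
      ⟨fun h' => .trans _ _ _ (.symm _ _ h) h', fun h' => .trans _ _ _ h h'⟩
    rw [this]
  refine .inr ⟨hu, hv, ?_⟩
  unfold inv
  rw [← hs]
  by_cases hne : (smallSet L B u).Nonempty
  · simp [hne]
  · have h1 : u.1 = v.1 := by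
      rcases hc with hc | hc | hc
      · exact absurd ⟨Nat.pair u.1 u.2, by simpa [smallSet] using ⟨hc, hu, .refl _⟩⟩ hne
      · exact absurd ⟨Nat.pair v.1 v.2, by simpa [smallSet] using ⟨hc, hv, h⟩⟩ hne
      · exact hc
    have hb : blockSet L u = blockSet L v := by
      ext j
      simp only [blockSet, Set.mem_ofPred_eq, h1]
      exact ⟨fun h' => .trans _ _ _ (.symm _ _ h) h', fun h' => .trans _ _ _ h h'⟩
    simp [hne, hb, h1]

lemma gam_cases {B m : ℕ} (h2 : 2 ≤ B) {p : ℕ × ℕ} (hp : p.2 ≤ B) :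
    (gam m p).2 ≤ B ∧ ((gam m p).1 ≤ B ∨ (gam m p).1 = m + 2) := by
  unfold gam
  split_ifs <;> simp <;> omega

lemma theta_iff_ker {L : List ((ℕ × ℕ) × (ℕ × ℕ))} {B : ℕ} (hB : Bounds B L) (u v : ℕ × ℕ) :
    theta L u v ↔ ker L B u v := by
  refine ⟨fun h => ?_, theta_of_ker⟩
  induction h with
  | rel u v h =>
    have ht : theta L u v := .rel _ _ h
    rcases h with h | ⟨m, p, q, h, rfl, rfl⟩
    · have := hB.2 _ _ h
      exact ker_of_theta_aux ht this.1.2 this.2.2 (.inl this.1.1)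
    · have := hB.2 _ _ h
      have h1 := gam_cases (m := m) hB.1 this.1.2
      have h2 := gam_cases (m := m) hB.1 this.2.2
      exact ker_of_theta_aux ht h1.1 h2.1 (by omega)
  | refl => exact .inl rfl
  | symm _ _ _ ih =>
    rcases ih with rfl | ⟨h1, h2, h3, h4⟩
    · exact .inl rfl
    · exact .inr ⟨h2, h1, h3.symm, by omega⟩
  | trans _ _ _ _ _ ih1 ih2 =>
    rcases ih1 with rfl | ⟨h1, h2, h3, h4⟩
    · exact ih2
    rcases ih2 with rfl | ⟨h5, h6, h7, h8⟩
    · exact .inr ⟨h1, h2, h3, h4⟩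
    · exact .inr ⟨h1, h6, h3.trans h7, by omega⟩

lemma theta_swap_iff {L : List ((ℕ × ℕ) × (ℕ × ℕ))} {B a b : ℕ} (hB : Bounds B L) (ha : B < a)
    (hb : B < b) (hk : kind B a = kind B b) (u v : ℕ × ℕ) :
    theta L (sw a b u) (sw a b v) ↔ theta L u v := by
  refine ⟨fun h => ?_, theta_swap hB ha hb hk⟩
  simpa [sw] using theta_swap hB ha hb hk h

lemma inv_eq_of_kind {L : List ((ℕ × ℕ) × (ℕ × ℕ))} {B a b : ℕ} (hB : Bounds B L)
    (hk : kind B a = kind B b) (i : ℕ) : inv L B (a, i) = inv L B (b, i) := by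
  rcases le_or_gt a B with ha | ha <;> rcases le_or_gt b B with hb | hb
  · simp only [kind, ha, hb, if_true] at hk
    rw [hk]
  · simp only [kind, ha, not_le.2 hb, if_true, if_false] at hk; omega
  · simp only [kind, hb, not_le.2 ha, if_true, if_false] at hk; omega
  · have hsw : ∀ j, sw a b (a, j) = (b, j) := fun j => by simp [sw]
    have hs : smallSet L B (a, i) = smallSet L B (b, i) := by
      ext c
      simp only [smallSet, Set.mem_ofPred_eq]
      refine and_congr_right fun h1 => and_congr_right fun _ => ?_
      rw [← theta_swap_iff hB ha hb hk, hsw, sw_of_le ha hb h1]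
    have hbl : blockSet L (a, i) = blockSet L (b, i) := by
      ext j
      simp only [blockSet, Set.mem_ofPred_eq]
      rw [← theta_swap_iff hB ha hb hk, hsw, hsw]
    unfold inv
    rw [hs, hbl]

/-! ### Computability -/

/-- A function that factors through a bounded primitive recursive one is primitive recursive: its
values are read off from a finite table. -/
lemma primrec_of_bounded {α : Type*} [Primcodable α] {A h : α → ℕ} (hh : Primrec h) (C : ℕ)
    (hC : ∀ x, h x < C) (hA : ∀ x y, h x = h y → A x = A y) : Primrec A := by
  have hf : Function.FactorsThrough A h := fun x y hxy => hA x y hxy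
  let T : ℕ → ℕ := Function.extend h A 0
  have : Primrec fun x => ((List.range C).map T).getD (h x) 0 :=
    (Primrec.list_getD 0).comp (Primrec.const _) hh
  refine this.of_eq fun x => ?_
  rw [List.getD_eq_getElem _ _ (by simpa using hC x)]
  simp [T, hf.extend_apply]

/-- The invariant `inv`, set to `0` on the elements where it is not used. -/
noncomputable def inv' (L : List ((ℕ × ℕ) × (ℕ × ℕ))) (B : ℕ) (u : ℕ × ℕ) : ℕ :=
  if u.2 ≤ B then inv L B u else 0

lemma inv'_primrec {L : List ((ℕ × ℕ) × (ℕ × ℕ))} {B : ℕ} (hB : Bounds B L) :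
    Primrec (inv' L B) := by
  refine primrec_of_bounded
    (h := fun u : ℕ × ℕ => kind B u.1 * (B + 2) + min u.2 (B + 1)) ?_
    ((2 * B + 3) * (B + 2)) ?_ ?_
  · exact Primrec.nat_add.comp (Primrec.nat_mul.comp ((kind_primrec B).comp Primrec.fst)
      (Primrec.const _)) (Primrec.nat_min.comp Primrec.snd (Primrec.const _))
  · intro u
    have := kind_le B u.1
    have : min u.2 (B + 1) < B + 2 := by omega
    nlinarith
  · rintro ⟨a, i⟩ ⟨b, j⟩ h
    dsimp only at h
    have hm : ∀ x r : ℕ, r < B + 2 → (x * (B + 2) + r) / (B + 2) = x ∧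
        (x * (B + 2) + r) % (B + 2) = r := fun x r hr => by
      rw [mul_comm, Nat.mul_add_div (by omega), Nat.div_eq_of_lt hr, Nat.mul_add_mod,
        Nat.mod_eq_of_lt hr]
      simp
    have h1 := hm (kind B a) (min i (B + 1)) (by omega)
    have h2 := hm (kind B b) (min j (B + 1)) (by omega)
    rw [h] at h1
    have hk : kind B a = kind B b := h1.1.symm.trans h2.1
    have hij : min i (B + 1) = min j (B + 1) := h1.2.symm.trans h2.2
    unfold inv'
    by_cases hi : i ≤ B
    · obtain rfl : i = j := by omega
      simp only [hi, if_true]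
      exact inv_eq_of_kind hB hk i
    · have hj : ¬ j ≤ B := by omega
      simp [hi, hj]

lemma ker_primrec {L : List ((ℕ × ℕ) × (ℕ × ℕ))} {B : ℕ} (hB : Bounds B L) :
    PrimrecRel (ker L B) := by
  have hi := inv'_primrec hB
  have : PrimrecRel fun u v : ℕ × ℕ => u = v ∨ (u.2 ≤ B ∧ v.2 ≤ B ∧ inv' L B u = inv' L B v ∧
      (inv' L B u % 2 = 0 ∨ u.1 = v.1)) := by
    have f1 : Primrec fun p : (ℕ × ℕ) × (ℕ × ℕ) => p.1 := Primrec.fst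
    have f2 : Primrec fun p : (ℕ × ℕ) × (ℕ × ℕ) => p.2 := Primrec.snd
    refine PrimrecPred.or (Primrec.eq.comp f1 f2) (PrimrecPred.and
      (Primrec.nat_le.comp (Primrec.snd.comp f1) (Primrec.const _)) (PrimrecPred.and
      (Primrec.nat_le.comp (Primrec.snd.comp f2) (Primrec.const _)) (PrimrecPred.and
      (Primrec.eq.comp (hi.comp f1) (hi.comp f2)) (PrimrecPred.or
      (Primrec.eq.comp (Primrec.nat_mod.comp (hi.comp f1) (Primrec.const 2)) (Primrec.const 0))
      (Primrec.eq.comp (Primrec.fst.comp f1) (Primrec.fst.comp f2))))))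
  refine this.of_eq fun u v => ?_
  unfold ker inv'
  refine or_congr_right (and_congr_right fun h1 => and_congr_right fun h2 => ?_)
  simp only [h1, h2, if_true]

lemma gam_primrec : Primrec₂ gam := by
  have f1 : Primrec fun p : ℕ × (ℕ × ℕ) => p.2.1 := Primrec.fst.comp Primrec.snd
  have f2 : Primrec fun p : ℕ × (ℕ × ℕ) => p.2.2 := Primrec.snd.comp Primrec.snd
  unfold gam
  refine Primrec.ite (Primrec.eq.comp f1 (Primrec.const 0)) (Primrec.pair (Primrec.const 0)
    (Primrec.ite (Primrec.eq.comp f2 (enm_primrec.comp Primrec.fst)) (Primrec.const 1)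
      (Primrec.const 0))) (Primrec.ite (Primrec.eq.comp f1 (Primrec.const 1))
    (Primrec.pair (Primrec.nat_add.comp Primrec.fst (Primrec.const 2)) f2) (Primrec.const (0, 0)))

/-- One step of the computation of the normal form from the prefix notation of a term: `c` is the
code of a symbol (even for variables, odd for operations, which are coded together with their
arity) and `u` is the normal form of the rest. -/
def nfStep (c : ℕ) (u : ℕ × ℕ) : ℕ × ℕ :=
  if c % 2 = 0 then (1, c / 2)
  else if (c / 2).unpair.1 = 0 then (0, (c / 2).unpair.2 / 2)
  else gam ((c / 2).unpair.2 / 2) u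

/-- The normal form computed from the code of a term. -/
def nfCode (n : ℕ) : ℕ × ℕ := (Denumerable.ofNat (List ℕ) n).foldr nfStep (0, 0)

lemma nfStep_primrec : Primrec₂ nfStep := by
  have c : Primrec fun p : ℕ × (ℕ × ℕ) => p.1 := Primrec.fst
  have h : Primrec fun p : ℕ × (ℕ × ℕ) => p.1 / 2 := Primrec.nat_div.comp c (Primrec.const 2)
  have a : Primrec fun p : ℕ × (ℕ × ℕ) => (p.1 / 2).unpair.1 :=
    Primrec.fst.comp (Primrec.unpair.comp h)
  have b : Primrec fun p : ℕ × (ℕ × ℕ) => (p.1 / 2).unpair.2 / 2 :=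
    Primrec.nat_div.comp (Primrec.snd.comp (Primrec.unpair.comp h)) (Primrec.const 2)
  unfold nfStep
  exact Primrec.ite (Primrec.eq.comp (Primrec.nat_mod.comp c (Primrec.const 2)) (Primrec.const 0))
    (Primrec.pair (Primrec.const 1) h) (Primrec.ite (Primrec.eq.comp a (Primrec.const 0))
    (Primrec.pair (Primrec.const 0) b) (gam_primrec.comp b Primrec.snd))

lemma nfCode_primrec : Primrec nfCode := by
  unfold nfCode
  exact Primrec.list_foldr (Primrec.ofNat _) (Primrec.const _)
    (nfStep_primrec.comp (Primrec.fst.comp Primrec.snd) (Primrec.snd.comp Primrec.snd)).to₂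

instance (i : ℕ) : Encodable ((CntLang ary).Functions i) :=
  inferInstanceAs (Encodable {j : ℕ // ary j = i})

lemma encode_term {X : Type*} [Encodable X] (t : (CntLang ary).Term X) :
    encode t = encode (t.listEncode.map encode) := by
  have h : ∀ {α : Type _} [Encodable α] (l : List α), encode l = encode (l.map encode) := by
    intro α _ l
    induction l with
    | nil => rfl
    | cons a l ih => simp only [List.map_cons, encode_list_cons, ih, encode_nat]
  exact h _

lemma nfCode_encode {X : Type*} [Encodable X] (t : (CntLang ary).Term X) :
    nfCode (encode t) = nfv (fun i => (1, encode i)) t := by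
  rw [encode_term, nfCode, Denumerable.ofNat_encode]
  induction t with
  | var i =>
    simp [Term.listEncode, nfStep, nfv]
  | @func n f ts ih =>
    have hn : f.1 % 2 = n := f.2
    have hn2 : n < 2 := by omega
    have hc : ∀ x : Σ i, (CntLang ary).Functions i,
        encode (Sum.inr x : X ⊕ Σ i, (CntLang ary).Functions i)
          = 2 * Nat.pair x.1 x.2.1 + 1 := fun x => rfl
    have hd : ∀ x, (2 * x + 1) / 2 = x := fun x => by omega
    interval_cases n
    · simp [Term.listEncode, nfStep, nfv, hc, hd, Nat.add_mod]
    · have := ih 0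
      simp [Term.listEncode, nfStep, nfv, hc, hd, Nat.add_mod, List.finRange_succ, this]

lemma laws_decidable : DecidableSetVia laws := by
  refine ⟨fun n => decide (nfCode n.unpair.1 = nfCode n.unpair.2), ?_, fun p => ?_⟩
  · exact (PrimrecPred.decide (Primrec.eq.comp
      (nfCode_primrec.comp (Primrec.fst.comp Primrec.unpair))
      (nfCode_primrec.comp (Primrec.snd.comp Primrec.unpair)))).to_comp
  · obtain ⟨s, t⟩ := p
    simp [encode_prod_val, nfCode_encode, laws, nfN]

lemma laws_solvable : SolvableWP (CntLang ary) laws := by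
  intro k R
  obtain ⟨B, hB⟩ := exists_bounds (nfRel R)
  obtain ⟨_, hk⟩ := (ker_primrec hB).comp
    (nfCode_primrec.comp (Primrec.fst.comp Primrec.unpair))
    (nfCode_primrec.comp (Primrec.snd.comp Primrec.unpair))
  refine ⟨_, hk.to_comp, fun s t => ?_⟩
  rw [presEqv_iff, theta_iff_ker hB, decide_eq_true_iff]
  simp only [Nat.unpair_pair, nfCode_encode]
  rfl

/-- The code of the presentation `d_{n+3} = d_0` together with the question `d_0 = d_1`. -/
lemma encode_question (n : ℕ) :
    encode (⟨0, ([(dTerm (n + 3), dTerm 0)], dTerm 0, dTerm 1)⟩ : Σ k : ℕ,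
      List ((CntLang ary).Term (Fin k) × (CntLang ary).Term (Fin k)) × (CntLang ary).Term (Fin k) ×
        (CntLang ary).Term (Fin k)) =
    Nat.pair 0 (Nat.pair
      (Nat.pair (Nat.pair (encode [2 * Nat.pair 0 (2 * (n + 3)) + 1])
        (encode [2 * Nat.pair 0 (2 * 0) + 1])) 0 + 1)
      (Nat.pair (encode [2 * Nat.pair 0 (2 * 0) + 1]) (encode [2 * Nat.pair 0 (2 * 1) + 1]))) := by
  have hd : ∀ n, encode (dTerm n : (CntLang ary).Term (Fin 0)) =
      encode [2 * Nat.pair 0 (2 * n) + 1] := fun n => by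
    rw [encode_term]
    rfl
  simp only [encode_sigma_val, encode_prod_val, encode_list_cons, encode_list_nil, hd, encode_nat]

lemma laws_not_uniform : ¬ UniformWP (CntLang ary) laws := by
  rintro ⟨f, hf, h⟩
  have key : ∀ c : Nat.Partrec.Code, (Nat.Partrec.Code.eval c 0).Dom ↔ _ := fun c =>
    (exists_enm_iff c).symm.trans ((d0_eqv_d1_iff (encode c)).symm.trans (h 0 _ _ _))
  simp only [encode_question] at key
  refine ComputablePred.halting_problem 0 ((ComputablePred.computable_iff).2 ⟨_, ?_, funext fun c =>
    propext (key c)⟩)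
  refine hf.comp (Primrec.to_comp ?_)
  have h1 : Primrec fun c : Nat.Partrec.Code => 2 * Nat.pair 0 (2 * (encode c + 3)) + 1 :=
    Primrec.succ.comp (Primrec.nat_mul.comp (Primrec.const 2) (Primrec₂.natPair.comp
      (Primrec.const 0) (Primrec.nat_mul.comp (Primrec.const 2)
        (Primrec.nat_add.comp Primrec.encode (Primrec.const 3)))))
  have h2 : Primrec fun c : Nat.Partrec.Code =>
      encode [2 * Nat.pair 0 (2 * (encode c + 3)) + 1] :=
    Primrec.encode.comp (Primrec.list_cons.comp h1 (Primrec.const []))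
  exact Primrec₂.natPair.comp (Primrec.const 0) (Primrec₂.natPair.comp (Primrec.succ.comp
    (Primrec₂.natPair.comp (Primrec₂.natPair.comp h2 (Primrec.const _)) (Primrec.const 0)))
    (Primrec.const _))

end SolvNotUnif

/-- There is a variety in a countable algebraic signature (countably many operation symbols, with
computable arity function), defined by a recursive set of equations, which has solvable but not
uniformly solvable word problem. -/
theorem exists_countable_signature_variety_solvable_not_uniformly_solvable :
    ∃ (ar : ℕ → ℕ), Computable ar ∧
      ∃ E : Set ((CntLang ar).Term ℕ × (CntLang ar).Term ℕ),
        DecidableSetVia E ∧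
        SolvableWP (CntLang ar) E ∧
        ¬ UniformWP (CntLang ar) E := by
  exact ⟨SolvNotUnif.ary, (Primrec.nat_mod.comp Primrec.id (Primrec.const 2)).to_comp,
    SolvNotUnif.laws, SolvNotUnif.laws_decidable, SolvNotUnif.laws_solvable,
    SolvNotUnif.laws_not_uniform⟩
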